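/- arXiv:1505.03111 — 2 statements merged into one kernel-verified Lean document; each statement's English description precedes it below -/
import Mathlib

section
/- For every integer p ≥ 1, the p-th derivative at u = 0 of the function f(u) = ( (1 − e^u)^{p+1} − (1 − e^u)^2 ) / e^u satisfies f^{(p)}(0) = −2 if p is even and f^{(p)}(0) = 0 if p is odd; equivalently, f^{(p)}(0) = (−1)^{p+1} − 1. -/
/-!
Expanding the second square, `f(u) = (1 - e^u)^(p+1) e^(-u) - e^(-u) - e^u + 2`. Since `1 - e^u`
vanishes at `0`, the first term vanishes there to order `p + 1`, so its `p`-th derivative at `0` is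
zero (`iteratedDeriv_one_sub_exp_pow_mul`). The remaining terms contribute `-(-1)^p - 1 + 0`,
where `1 ≤ p` is what kills the constant.
-/

/-- A smooth multiple of `(1 - e^u)^m` has vanishing derivatives of order less than `m` at `0`:
differentiating once leaves a smooth multiple of `(1 - e^u)^(m-1)`. -/
theorem iteratedDeriv_one_sub_exp_pow_mul (n : ℕ) : ∀ (m : ℕ) (g : ℝ → ℝ),
    ContDiff ℝ (⊤ : ℕ∞) g → n < m →
      iteratedDeriv n (fun u => (1 - Real.exp u) ^ m * g u) 0 = 0 := by
  induction n with
  | zero =>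
    intro m g _ hm
    simp [iteratedDeriv_zero, hm.ne']
  | succ n ih =>
    intro m g hg hm
    obtain ⟨k, rfl⟩ : ∃ k, m = k + 1 := ⟨m - 1, by omega⟩
    have hderiv : deriv (fun u => (1 - Real.exp u) ^ (k + 1) * g u) =
        fun u => (1 - Real.exp u) ^ k *
          (-(k + 1) * Real.exp u * g u + (1 - Real.exp u) * deriv g u) := by
      funext u
      have h1 := ((Real.hasDerivAt_exp u).const_sub 1).pow (k + 1)
      have h2 := (hg.differentiable (by simp) u).hasDerivAt
      refine (h1.mul h2).deriv.trans ?_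
      simp
      ring
    rw [iteratedDeriv_succ', hderiv]
    have hg' : ContDiff ℝ (⊤ : ℕ∞) (deriv g) := (contDiff_infty_iff_deriv.1 hg).2
    exact ih k _ (by fun_prop) (by omega)

/-- The `p`-th derivative at `0` of `u ↦ ((1 − e^u)^{p+1} − (1 − e^u)^2)/e^u` is
`−2` if `p` is even and `0` if `p` is odd; equivalently, it equals `(−1)^{p+1} − 1`. -/
theorem stmt17 (p : ℕ) (hp : 1 ≤ p) (f : ℝ → ℝ)
    (hf : ∀ u : ℝ, f u = ((1 - Real.exp u) ^ (p + 1) - (1 - Real.exp u) ^ 2) / Real.exp u) :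
    iteratedDeriv p f 0 = (if p % 2 = 0 then (-2 : ℝ) else 0) ∧
      iteratedDeriv p f 0 = (-1 : ℝ) ^ (p + 1) - 1 := by
  have key : iteratedDeriv p f 0 = (-1 : ℝ) ^ (p + 1) - 1 := by
    have hfe : f = (fun u => (1 - Real.exp u) ^ (p + 1) * Real.exp (-u)) -
        (fun u => Real.exp (-u)) - Real.exp + fun _ => (2 : ℝ) := by
      funext u
      have := Real.exp_ne_zero u
      simp only [hf, Pi.add_apply, Pi.sub_apply, Real.exp_neg]
      field_simp
      ring
    have c1 : ContDiff ℝ p (fun u => (1 - Real.exp u) ^ (p + 1) * Real.exp (-u)) := by fun_prop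
    have c2 : ContDiff ℝ p (fun u => Real.exp (-u)) := by fun_prop
    have c3 : ContDiff ℝ p Real.exp := Real.contDiff_exp
    have e1 := iteratedDeriv_one_sub_exp_pow_mul p (p + 1) (fun u => Real.exp (-u))
      (by fun_prop) (by omega)
    have e2 : iteratedDeriv p (fun u => Real.exp (-u)) 0 = (-1) ^ p := by
      rw [iteratedDeriv_comp_neg]
      simp [iteratedDeriv_eq_iterate]
    have e3 : iteratedDeriv p Real.exp 0 = 1 := by
      simp [iteratedDeriv_eq_iterate]
    have e4 : iteratedDeriv p (fun _ : ℝ => (2 : ℝ)) 0 = 0 := by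
      rw [iteratedDeriv_const, if_neg (by omega)]
    rw [hfe, iteratedDeriv_add, iteratedDeriv_sub, iteratedDeriv_sub, e1, e2, e3, e4]
    · ring
    · exact c1.contDiffAt
    · exact c2.contDiffAt
    · exact (c1.sub c2).contDiffAt
    · exact c3.contDiffAt
    · exact ((c1.sub c2).sub c3).contDiffAt
    · exact contDiffAt_const
  refine ⟨?_, key⟩
  rw [key]
  split_ifs with h
  · rw [(Nat.even_iff.2 h).add_one.neg_one_pow]
    norm_num
  · rw [(Nat.not_even_iff_odd.1 (mt Nat.even_iff.1 h)).add_one.neg_one_pow]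
    norm_num
end

section
/- Let β ∈ (0, π) and define c_{4,0}^β = c_{4,4}^β = 1/sin^4(β/2), c_{4,1}^β = c_{4,3}^β = 4cos(β/2)/sin^4(β/2), c_{4,2}^β = (2 + 4cos²(β/2))/sin^4(β/2), and b_{4,i}(u) = c_{4,i}^β · sin^{4−i}((β−u)/2) · sin^i(u/2) for i = 0, …, 4. Then for every u ∈ [0, β] the following five identities hold: (1) 1 = b_{4,0}(u) + b_{4,1}(u) + b_{4,2}(u) + b_{4,3}(u) + b_{4,4}(u); (2) sin(u) = (1/2)tan(β/2) · b_{4,1}(u) + ( 3sin(β)/(2 + 4cos²(β/2)) ) · b_{4,2}(u) + ( sin(β) − (1/2)cos(β)tan(β/2) ) · b_{4,3}(u) + sin(β) · b_{4,4}(u); (3) cos(u) = b_{4,0}(u) + b_{4,1}(u) + ( 3(1 + cos(β))/(2 + 4cos²(β/2)) ) · b_{4,2}(u) + ( cos(β) + (1/2)sin(β)tan(β/2) ) · b_{4,3}(u) + cos(β) · b_{4,4}(u); (4) sin(2u) = tan(β/2) · b_{4,1}(u) + ( 6sin(β)/(2 + 4cos²(β/2)) ) · b_{4,2}(u) + ( sin(2β)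 − cos(2β)tan(β/2) ) · b_{4,3}(u) + sin(2β) · b_{4,4}(u); (5) cos(2u) = b_{4,0}(u) + b_{4,1}(u) + ( 6cos(β)/(2 + 4cos²(β/2)) ) · b_{4,2}(u) + ( cos(2β) + sin(2β)tan(β/2) ) · b_{4,3}(u) + cos(2β) · b_{4,4}(u). -/
/-!
Put `C = cos (β/2)`, `S = sin (β/2)`, `s = sin (u/2)`, `k = cos (u/2)` and
`a = sin ((β - u)/2) = S k - C s`. Since `S k = a + C s`, the functions `S², S² sin u, S² cos u`
are quadratic forms in `(a, s)`:

* `S² = a² + 2 C a s + s²`,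
* `S² sin u = 2 S s (a + C s)`,
* `S² cos u = a² + 2 C a s + (2 C² - 1) s²`.

Each element of the ordinary basis, multiplied by `S⁴`, is a quadratic polynomial in these three
forms, homogeneous of degree four in `(a, s)`. Comparing the coefficients of `a^(4-i) s^i` with
those of `b_{4,i}`, and using `C ≠ 0`, `S ≠ 0` on `(0, π)`, gives the five identities.
-/

open Real

/-- The explicit basis transformation for second order trigonometric polynomials:
the ordinary basis `1, sin u, cos u, sin 2u, cos 2u` expressed in the normalized
B-basis `b_{4,i}(u) = c_{4,i}^β sin^{4−i}((β−u)/2) sin^i(u/2)`, `i = 0, …, 4`. -/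
theorem stmt19 (β : ℝ) (hβ : β ∈ Set.Ioo 0 π)
    (c : ℕ → ℝ) (b : ℕ → ℝ → ℝ)
    (hc0 : c 0 = 1 / Real.sin (β / 2) ^ 4)
    (hc1 : c 1 = 4 * Real.cos (β / 2) / Real.sin (β / 2) ^ 4)
    (hc2 : c 2 = (2 + 4 * Real.cos (β / 2) ^ 2) / Real.sin (β / 2) ^ 4)
    (hc3 : c 3 = 4 * Real.cos (β / 2) / Real.sin (β / 2) ^ 4)
    (hc4 : c 4 = 1 / Real.sin (β / 2) ^ 4)
    (hb : ∀ i ≤ 4, ∀ u : ℝ,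
      b i u = c i * Real.sin ((β - u) / 2) ^ (4 - i) * Real.sin (u / 2) ^ i) :
    ∀ u ∈ Set.Icc 0 β,
      (1 = b 0 u + b 1 u + b 2 u + b 3 u + b 4 u) ∧
      (Real.sin u =
        (1 / 2) * Real.tan (β / 2) * b 1 u +
          (3 * Real.sin β / (2 + 4 * Real.cos (β / 2) ^ 2)) * b 2 u +
          (Real.sin β - (1 / 2) * Real.cos β * Real.tan (β / 2)) * b 3 u +
          Real.sin β * b 4 u) ∧
      (Real.cos u =
        b 0 u + b 1 u +
          (3 * (1 + Real.cos β) / (2 + 4 * Real.cos (β / 2) ^ 2)) * b 2 u +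
          (Real.cos β + (1 / 2) * Real.sin β * Real.tan (β / 2)) * b 3 u +
          Real.cos β * b 4 u) ∧
      (Real.sin (2 * u) =
        Real.tan (β / 2) * b 1 u +
          (6 * Real.sin β / (2 + 4 * Real.cos (β / 2) ^ 2)) * b 2 u +
          (Real.sin (2 * β) - Real.cos (2 * β) * Real.tan (β / 2)) * b 3 u +
          Real.sin (2 * β) * b 4 u) ∧
      (Real.cos (2 * u) =
        b 0 u + b 1 u +
          (6 * Real.cos β / (2 + 4 * Real.cos (β / 2) ^ 2)) * b 2 u +
          (Real.cos (2 * β) + Real.sin (2 * β) * Real.tan (β / 2)) * b 3 u +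
          Real.cos (2 * β) * b 4 u) := by
  intro u _
  obtain ⟨h0, hπ⟩ := hβ
  have hS : Real.sin (β / 2) ≠ 0 :=
    (Real.sin_pos_of_pos_of_lt_pi (by linarith) (by linarith)).ne'
  have hC : Real.cos (β / 2) ≠ 0 :=
    (Real.cos_pos_of_mem_Ioo ⟨by linarith, by linarith⟩).ne'
  have hD : 2 + 4 * Real.cos (β / 2) ^ 2 ≠ 0 := by positivity
  have ha : Real.sin ((β - u) / 2) =
      Real.sin (β / 2) * Real.cos (u / 2) - Real.cos (β / 2) * Real.sin (u / 2) := by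
    rw [sub_div, Real.sin_sub]
  have hCS := Real.sin_sq_add_cos_sq (β / 2)
  have hks := Real.sin_sq_add_cos_sq (u / 2)
  have hsu : Real.sin u = 2 * Real.sin (u / 2) * Real.cos (u / 2) := by
    rw [← Real.sin_two_mul]; ring_nf
  have hcu : Real.cos u = 2 * Real.cos (u / 2) ^ 2 - 1 := by
    rw [← Real.cos_two_mul]; ring_nf
  have hsβ : Real.sin β = 2 * Real.sin (β / 2) * Real.cos (β / 2) := by
    rw [← Real.sin_two_mul]; ring_nf
  have hcβ : Real.cos β = 2 * Real.cos (β / 2) ^ 2 - 1 := by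
    rw [← Real.cos_two_mul]; ring_nf
  rw [hb 0 (by norm_num), hb 1 (by norm_num), hb 2 (by norm_num), hb 3 (by norm_num),
    hb 4 (by norm_num), hc0, hc1, hc2, hc3, hc4, Real.tan_eq_sin_div_cos,
    Real.sin_two_mul, Real.sin_two_mul, Real.cos_two_mul, Real.cos_two_mul]
  generalize Real.sin ((β - u) / 2) = a at *
  generalize Real.sin (β / 2) = S at *
  generalize Real.cos (β / 2) = C at *
  generalize Real.sin (u / 2) = s at *
  generalize Real.cos (u / 2) = k at *
  have h1 : S ^ 2 = a ^ 2 + 2 * C * a * s + s ^ 2 := by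
    rw [ha]; linear_combination (-S ^ 2) * hks + s ^ 2 * hCS
  have h2 : S ^ 2 * Real.sin u = 2 * S * s * (a + C * s) := by
    rw [hsu, ha]; ring
  have h3 : S ^ 2 * Real.cos u = a ^ 2 + 2 * C * a * s + (2 * C ^ 2 - 1) * s ^ 2 := by
    rw [hcu, ha]; linear_combination S ^ 2 * hks - s ^ 2 * hCS
  rw [hsβ, hcβ]
  generalize Real.sin u = X at *
  generalize Real.cos u = Y at *
  -- The ordinary basis, scaled by `S ^ 4`, as quartic forms in `(a, s)`.
  have e0 : S ^ 4 = (a ^ 2 + 2 * C * a * s + s ^ 2) ^ 2 := by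
    rw [← h1]; ring
  have e1 : S ^ 4 * X = 2 * S * s * (a + C * s) * (a ^ 2 + 2 * C * a * s + s ^ 2) := by
    rw [← h1, ← h2]; ring
  have e2 : S ^ 4 * Y = (a ^ 2 + 2 * C * a * s + (2 * C ^ 2 - 1) * s ^ 2) *
      (a ^ 2 + 2 * C * a * s + s ^ 2) := by
    rw [← h1, ← h3]; ring
  have e3 : S ^ 4 * (2 * X * Y) = 2 * (2 * S * s * (a + C * s)) *
      (a ^ 2 + 2 * C * a * s + (2 * C ^ 2 - 1) * s ^ 2) := by
    rw [← h2, ← h3]; ring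
  have e4 : S ^ 4 * (2 * Y ^ 2 - 1) = 2 * (a ^ 2 + 2 * C * a * s + (2 * C ^ 2 - 1) * s ^ 2) ^ 2 -
      (a ^ 2 + 2 * C * a * s + s ^ 2) ^ 2 := by
    rw [← h1, ← h3]; ring
  have hS4 : S ^ 4 ≠ 0 := pow_ne_zero 4 hS
  have hS2 : S ^ 2 = 1 - C ^ 2 := by linarith
  clear hb hc0 hc1 hc2 hc3 hc4 ha hks hsu hcu hsβ hcβ h1 h2 h3
  refine ⟨?_, ?_, ?_, ?_, ?_⟩ <;> apply mul_left_cancel₀ hS4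
  · rw [mul_one]; nth_rw 1 [e0]
    field_simp
    ring
  · rw [e1]
    field_simp
    ring
  · rw [e2]
    field_simp
    rw [hS2]
    ring
  · rw [e3]
    field_simp
    ring
  · rw [e4]
    field_simp
    rw [hS2]
    ring
end
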